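/- Second Fundamental Theorem for the GFD of arbitrary order (Riemann–Liouville case): Let n ∈ ℕ and let (κ, k) be a pair of kernels from L_n. Then for every f of the form f = κ * φ with φ ∈ C_{−1}(0,∞) and every t > 0, (I_{(κ)} D_{(k)} f)(t) = f(t). -/

import Mathlib

open Real MeasureTheory Set Filter Topology

/-- The Laplace convolution `(f * g)(t) = ∫₀ᵗ f(t-τ) g(τ) dτ`. -/
noncomputable def lconv (f g : ℝ → ℝ) : ℝ → ℝ :=
  fun t => ∫ τ in (0:ℝ)..t, f (t - τ) * g τ

/-- The space `C_{-1}(0,∞)`: functions of the form `t^p f₁(t)` with `p > -1`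
and `f₁` continuous on `[0,∞)`. -/
def Cm1 (f : ℝ → ℝ) : Prop :=
  ∃ p : ℝ, -1 < p ∧ ∃ f₁ : ℝ → ℝ, ContinuousOn f₁ (Set.Ici 0) ∧
    ∀ t : ℝ, 0 < t → f t = t ^ p * f₁ t

/-- The subspace `C_{-1,0}(0,∞)`: functions of the form `t^p f₁(t)` with `-1 < p < 0`
and `f₁` continuous on `[0,∞)`. -/
def Cm10 (f : ℝ → ℝ) : Prop :=
  ∃ p : ℝ, -1 < p ∧ p < 0 ∧ ∃ f₁ : ℝ → ℝ, ContinuousOn f₁ (Set.Ici 0) ∧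
    ∀ t : ℝ, 0 < t → f t = t ^ p * f₁ t

/-!
Since `k * f = k * (κ * φ) = (κ * k) * φ` and convolution with `t ^ (n - 1) / (n - 1)!` is the
`n`-fold iterated integral, differentiating `n` times gives `D_{(k)} f = φ`, whence
`I_{(κ)} D_{(k)} f = κ * φ = f`.

Only the pointwise associativity of `*` on `(0, ∞)` needs care. It holds for functions that are
integrable near `0` and locally bounded away from `0`, a class closed under `*`: in
`∫₀ᵗ f (t - τ) g τ dτ` one of the arguments `t - τ` and `τ` is always at least `t / 2`, so one of
the two factors is bounded while the other is integrable.
-/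

theorem lconv_comm (f g : ℝ → ℝ) : lconv f g = lconv g f := by
  ext t
  simpa [lconv, mul_comm] using
    intervalIntegral.integral_comp_sub_left (fun τ => g (t - τ) * f τ) t (a := 0) (b := t)

theorem lconv_congr {f₁ f₂ g₁ g₂ : ℝ → ℝ} {t : ℝ} (ht : 0 ≤ t) (hf : EqOn f₁ f₂ (Ioo 0 t))
    (hg : EqOn g₁ g₂ (Ioo 0 t)) : lconv f₁ g₁ t = lconv f₂ g₂ t :=
  intervalIntegral.integral_congr_Ioo_of_le ht fun _ hτ =>
    congrArg₂ (· * ·) (hf ⟨sub_pos.2 hτ.2, sub_lt_self t hτ.1⟩) (hg hτ)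

theorem posConvolution_eq_indicator_lconv (f g : ℝ → ℝ) :
    posConvolution f g (ContinuousLinearMap.mul ℝ ℝ) = (Ioi 0).indicator (lconv f g) := by
  rw [lconv_comm]
  simp only [posConvolution, ContinuousLinearMap.mul_apply', mul_comm (f _)]
  rfl

theorem indicator_lconv (f g : ℝ → ℝ) :
    (Ioi 0).indicator (lconv f g) =
      convolution ((Ioi 0).indicator f) ((Ioi 0).indicator g) (ContinuousLinearMap.mul ℝ ℝ) := by
  rw [← posConvolution_eq_indicator_lconv, posConvolution_eq_convolution_indicator f g _ volume]

theorem indicator_Ioi_sub_mul_indicator_Ioi (f g : ℝ → ℝ) (t τ : ℝ) :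
    (Ioi 0).indicator f (t - τ) * (Ioi 0).indicator g τ =
      (Ioo 0 t).indicator (fun τ => f (t - τ) * g τ) τ := by
  simp only [indicator_apply, mem_Ioi, mem_Ioo, sub_pos]
  split_ifs <;> simp_all

theorem intervalIntegrable_comp_sub_left_self {f : ℝ → ℝ} {t : ℝ}
    (hf : IntervalIntegrable f volume 0 t) :
    IntervalIntegrable (fun τ => f (t - τ)) volume 0 t := by
  simpa using (hf.comp_sub_left t).symm

theorem lconv_one (g : ℝ → ℝ) : lconv 1 g = fun t => ∫ τ in (0 : ℝ)..t, g τ := by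
  ext t
  simp [lconv]

theorem continuousOn_lconv_one {g : ℝ → ℝ}
    (hg : ∀ ⦃T : ℝ⦄, 0 < T → IntervalIntegrable g volume 0 T) :
    ContinuousOn (lconv 1 g) (Ioi 0) := by
  intro t ht
  have ht' : 0 < t + 1 := add_pos ht one_pos
  have hprim : ContinuousOn (fun x => ∫ τ in 0..x, g τ) (uIcc 0 (t + 1)) :=
    intervalIntegral.continuousOn_primitive_interval' (hg ht') left_mem_uIcc
  rw [uIcc_of_le ht'.le] at hprim
  rw [lconv_one]
  exact (hprim.continuousAt (Icc_mem_nhds ht (lt_add_one t))).continuousWithinAt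

theorem hasDerivAt_lconv_one {g : ℝ → ℝ} {t : ℝ} (hg : IntervalIntegrable g volume 0 t)
    (hgm : StronglyMeasurableAtFilter g (𝓝 t)) (hgt : ContinuousAt g t) :
    HasDerivAt (lconv 1 g) (g t) t := by
  rw [lconv_one]
  exact intervalIntegral.integral_hasDerivAt_right hg hgm hgt

/-- The functions on `(0, ∞)` that are integrable near `0` and locally bounded away from `0`: a
class containing `C_{-1}(0,∞)` in which Laplace convolutions exist at every point. The
values on `(-∞, 0]` play no role. -/
structure LaplaceAdmissible (f : ℝ → ℝ) : Prop where
  intervalIntegrable : ∀ ⦃T : ℝ⦄, 0 < T → IntervalIntegrable f volume 0 T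
  exists_norm_le : ∀ ⦃a : ℝ⦄, 0 < a → ∀ b, ∃ C, ∀ t ∈ Icc a b, ‖f t‖ ≤ C

namespace LaplaceAdmissible

variable {f g h : ℝ → ℝ}

theorem of_continuousOn (hf : ContinuousOn f (Ioi 0))
    (hint : ∀ ⦃T : ℝ⦄, 0 < T → IntervalIntegrable f volume 0 T) : LaplaceAdmissible f where
  intervalIntegrable := hint
  exists_norm_le _ ha _ :=
    isCompact_Icc.exists_bound_of_continuousOn <| hf.mono fun _ ht => ha.trans_le ht.1

theorem norm (hf : LaplaceAdmissible f) : LaplaceAdmissible (fun t => ‖f t‖) where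
  intervalIntegrable _ hT := (hf.intervalIntegrable hT).norm
  exists_norm_le _ ha b := by simpa only [norm_norm] using hf.exists_norm_le ha b

theorem aestronglyMeasurable_indicator (hf : LaplaceAdmissible f) :
    AEStronglyMeasurable ((Ioi 0).indicator f) := by
  have hcover : (⋃ n : ℕ, Ioc (0 : ℝ) (n + 1)) = Ioi 0 := by
    ext t
    have : ∃ n : ℕ, t ≤ n + 1 := (exists_nat_ge t).imp fun n hn => by linarith
    simp [this]
  rw [aestronglyMeasurable_indicator_iff measurableSet_Ioi, ← hcover,
    aestronglyMeasurable_iUnion_iff]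
  exact fun n => (hf.intervalIntegrable n.cast_add_one_pos).1.aestronglyMeasurable

theorem stronglyMeasurableAtFilter (hf : LaplaceAdmissible f) {t : ℝ} (ht : 0 < t) :
    StronglyMeasurableAtFilter f (𝓝 t) :=
  ⟨Ioi 0, Ioi_mem_nhds ht,
    (aestronglyMeasurable_indicator_iff measurableSet_Ioi).1 hf.aestronglyMeasurable_indicator⟩

theorem exists_norm_mul_le (hf : LaplaceAdmissible f) (hg : LaplaceAdmissible g) {a : ℝ}
    (ha : 0 < a) (b : ℝ) :
    ∃ C, 0 ≤ C ∧ ∀ t ∈ Icc a b, ∀ τ ∈ Ioc 0 t,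
      ‖f (t - τ) * g τ‖ ≤ C * (‖f (t - τ)‖ + ‖g τ‖) := by
  obtain ⟨A, hA⟩ := hf.exists_norm_le (half_pos ha) b
  obtain ⟨B, hB⟩ := hg.exists_norm_le (half_pos ha) b
  refine ⟨max 0 (max A B), le_max_left _ _, fun t ht τ hτ => ?_⟩
  set C := max 0 (max A B) with hC
  have hC₀ : 0 ≤ C := le_max_left _ _
  rw [norm_mul, mul_add]
  rcases le_total τ (t / 2) with hle | hge
  · have hfC : ‖f (t - τ)‖ ≤ C :=
      (hA _ ⟨by linarith [ht.1], by linarith [ht.2, hτ.1]⟩).trans (by simp [hC])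
    have : ‖f (t - τ)‖ * ‖g τ‖ ≤ C * ‖g τ‖ := by gcongr
    linarith [mul_nonneg hC₀ (norm_nonneg (f (t - τ)))]
  · have hgC : ‖g τ‖ ≤ C :=
      (hB _ ⟨by linarith [ht.1], by linarith [ht.2, hτ.2]⟩).trans (by simp [hC])
    have : ‖f (t - τ)‖ * ‖g τ‖ ≤ ‖f (t - τ)‖ * C := by gcongr
    linarith [mul_nonneg hC₀ (norm_nonneg (g τ))]

theorem intervalIntegrable_mul_comp_sub_left (hf : LaplaceAdmissible f)
    (hg : LaplaceAdmissible g) {t : ℝ} (ht : 0 < t) :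
    IntervalIntegrable (fun τ => f (t - τ) * g τ) volume 0 t := by
  obtain ⟨C, -, hC⟩ := hf.exists_norm_mul_le hg ht t
  have hft := intervalIntegrable_comp_sub_left_self (hf.intervalIntegrable ht)
  have hgt := hg.intervalIntegrable ht
  refine ((hft.norm.add hgt.norm).const_mul C).mono_fun'
    (hft.def'.aestronglyMeasurable.mul hgt.def'.aestronglyMeasurable) ?_
  rw [uIoc_of_le ht.le]
  exact ae_restrict_of_forall_mem measurableSet_Ioc (hC t ⟨le_rfl, le_rfl⟩)

theorem convolutionExistsAt_indicator (hf : LaplaceAdmissible f) (hg : LaplaceAdmissible g)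
    (t : ℝ) :
    ConvolutionExistsAt ((Ioi 0).indicator f) ((Ioi 0).indicator g) t
      (ContinuousLinearMap.mul ℝ ℝ) := by
  rw [← convolutionExistsAt_flip, ConvolutionExistsAt]
  simp only [ContinuousLinearMap.flip_apply, ContinuousLinearMap.mul_apply',
    indicator_Ioi_sub_mul_indicator_Ioi]
  rw [integrable_indicator_iff measurableSet_Ioo]
  rcases le_or_gt t 0 with ht | ht
  · simp [Ioo_eq_empty ht.not_gt]
  · exact (hf.intervalIntegrable_mul_comp_sub_left hg ht).1.mono_set Ioo_subset_Ioc_self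

theorem intervalIntegrable_lconv (hf : LaplaceAdmissible f) (hg : LaplaceAdmissible g) {T : ℝ}
    (hT : 0 < T) : IntervalIntegrable (lconv f g) volume 0 T := by
  have hcut {u : ℝ → ℝ} (hu : LaplaceAdmissible u) :
      IntegrableOn ((Ioo 0 T).indicator u) (Ioi 0) :=
    ((integrable_indicator_iff measurableSet_Ioo).2
      ((hu.intervalIntegrable hT).1.mono_set Ioo_subset_Ioc_self)).integrableOn
  have hpos := integrable_posConvolution (hcut hf) (hcut hg) (ContinuousLinearMap.mul ℝ ℝ)
  refine hpos.intervalIntegrable.congr_uIoo fun t ht => ?_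
  rw [uIoo_of_le hT.le] at ht
  rw [posConvolution_eq_indicator_lconv, indicator_of_mem (mem_Ioi.2 ht.1)]
  have hIoo : Ioo 0 t ⊆ Ioo 0 T := Ioo_subset_Ioo_right ht.2.le
  exact lconv_congr ht.1.le (eqOn_indicator.mono hIoo) (eqOn_indicator.mono hIoo)

theorem exists_norm_lconv_le (hf : LaplaceAdmissible f) (hg : LaplaceAdmissible g) {a : ℝ}
    (ha : 0 < a) (b : ℝ) : ∃ C, ∀ t ∈ Icc a b, ‖lconv f g t‖ ≤ C := by
  obtain ⟨C, hC₀, hC⟩ := hf.exists_norm_mul_le hg ha b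
  refine ⟨C * ((∫ τ in 0..b, ‖f τ‖) + ∫ τ in 0..b, ‖g τ‖), fun t ht => ?_⟩
  have ht₀ : 0 < t := ha.trans_le ht.1
  have hft := (intervalIntegrable_comp_sub_left_self (hf.intervalIntegrable ht₀)).norm
  have hgt := (hg.intervalIntegrable ht₀).norm
  have hmono {u : ℝ → ℝ} (hu : LaplaceAdmissible u) :
      ∫ τ in 0..t, ‖u τ‖ ≤ ∫ τ in 0..b, ‖u τ‖ :=
    intervalIntegral.integral_mono_interval le_rfl ht₀.le ht.2
      (Eventually.of_forall fun τ => norm_nonneg (u τ))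
      (hu.intervalIntegrable (ht₀.trans_le ht.2)).norm
  calc
    ‖lconv f g t‖ ≤ ∫ τ in 0..t, C * (‖f (t - τ)‖ + ‖g τ‖) :=
      intervalIntegral.norm_integral_le_of_norm_le ht₀.le
        (Eventually.of_forall (hC t ht)) ((hft.add hgt).const_mul C)
    _ = C * ((∫ τ in 0..t, ‖f τ‖) + ∫ τ in 0..t, ‖g τ‖) := by
      rw [intervalIntegral.integral_const_mul, intervalIntegral.integral_add hft hgt,
        intervalIntegral.integral_comp_sub_left (fun τ => ‖f τ‖), sub_self, sub_zero]
    _ ≤ C * ((∫ τ in 0..b, ‖f τ‖) + ∫ τ in 0..b, ‖g τ‖) :=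
      mul_le_mul_of_nonneg_left (add_le_add (hmono hf) (hmono hg)) hC₀

theorem laplaceAdmissible_lconv (hf : LaplaceAdmissible f) (hg : LaplaceAdmissible g) :
    LaplaceAdmissible (lconv f g) where
  intervalIntegrable _ hT := hf.intervalIntegrable_lconv hg hT
  exists_norm_le _ ha b := hf.exists_norm_lconv_le hg ha b

theorem lconv_assoc (hf : LaplaceAdmissible f) (hg : LaplaceAdmissible g)
    (hh : LaplaceAdmissible h) :
    EqOn (lconv (lconv f g) h) (lconv f (lconv g h)) (Ioi 0) := by
  intro t ht
  rw [← indicator_of_mem ht (lconv (lconv f g) h), ← indicator_of_mem ht (lconv f (lconv g h))]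
  simp only [indicator_lconv]
  refine convolution_assoc _ _ _ _ (fun x y z => mul_assoc x y z)
    hf.aestronglyMeasurable_indicator hg.aestronglyMeasurable_indicator
    hh.aestronglyMeasurable_indicator
    (Eventually.of_forall (hf.convolutionExistsAt_indicator hg)) ?_ ?_
  · simp only [norm_indicator_eq_indicator_norm]
    exact Eventually.of_forall (hg.norm.convolutionExistsAt_indicator hh.norm)
  · simp only [norm_indicator_eq_indicator_norm]
    rw [← indicator_lconv]
    exact hf.norm.convolutionExistsAt_indicator
      (hg.norm.laplaceAdmissible_lconv hh.norm) t

end LaplaceAdmissible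

/-- The power `t ^ m / m!`, whose Laplace convolution with `g` is the `(m + 1)`-fold iterated
integral of `g` from `0`. -/
noncomputable def powKernel (m : ℕ) (t : ℝ) : ℝ :=
  t ^ m / m.factorial

theorem continuous_powKernel (m : ℕ) : Continuous (powKernel m) := by
  unfold powKernel
  fun_prop

theorem powKernel_zero : powKernel 0 = 1 := by
  ext t
  simp [powKernel]

theorem lconv_one_powKernel (m : ℕ) : lconv 1 (powKernel m) = powKernel (m + 1) := by
  ext t
  simp [lconv, powKernel, integral_pow, Nat.factorial_succ]
  field_simp

theorem laplaceAdmissible_powKernel (m : ℕ) : LaplaceAdmissible (powKernel m) :=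
  .of_continuousOn (continuous_powKernel m).continuousOn
    fun _ _ => (continuous_powKernel m).intervalIntegrable _ _

namespace LaplaceAdmissible

variable {g : ℝ → ℝ}

theorem lconv_powKernel_succ (hg : LaplaceAdmissible g) (m : ℕ) :
    EqOn (lconv (powKernel (m + 1)) g) (lconv 1 (lconv (powKernel m) g)) (Ioi 0) := by
  rw [← lconv_one_powKernel, ← powKernel_zero]
  exact (laplaceAdmissible_powKernel 0).lconv_assoc (laplaceAdmissible_powKernel m) hg

theorem continuousOn_lconv_powKernel (hg : LaplaceAdmissible g) (m : ℕ) :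
    ContinuousOn (lconv (powKernel m) g) (Ioi 0) := by
  cases m with
  | zero => simpa only [powKernel_zero] using continuousOn_lconv_one hg.intervalIntegrable
  | succ m =>
    have hmg := (laplaceAdmissible_powKernel m).laplaceAdmissible_lconv hg
    exact (continuousOn_lconv_one hmg.intervalIntegrable).congr (hg.lconv_powKernel_succ m)

theorem deriv_lconv_one (hg : LaplaceAdmissible g) (hgc : ContinuousOn g (Ioi 0)) :
    EqOn (deriv (lconv 1 g)) g (Ioi 0) := fun _ ht =>
  (hasDerivAt_lconv_one (hg.intervalIntegrable ht) (hg.stronglyMeasurableAtFilter ht)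
    (hgc.continuousAt (Ioi_mem_nhds ht))).deriv

theorem deriv_lconv_powKernel_succ (hg : LaplaceAdmissible g) (m : ℕ) :
    EqOn (deriv (lconv (powKernel (m + 1)) g)) (lconv (powKernel m) g) (Ioi 0) :=
  ((hg.lconv_powKernel_succ m).deriv isOpen_Ioi).trans <|
    ((laplaceAdmissible_powKernel m).laplaceAdmissible_lconv hg).deriv_lconv_one
      (hg.continuousOn_lconv_powKernel m)

theorem iteratedDeriv_lconv_powKernel (hg : LaplaceAdmissible g) (hgc : ContinuousOn g (Ioi 0))
    (m : ℕ) : EqOn (iteratedDeriv (m + 1) (lconv (powKernel m) g)) g (Ioi 0) := by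
  induction m with
  | zero => simpa only [zero_add, iteratedDeriv_one, powKernel_zero] using hg.deriv_lconv_one hgc
  | succ m ih =>
    rw [iteratedDeriv_succ']
    exact ((hg.deriv_lconv_powKernel_succ m).iteratedDeriv_of_isOpen isOpen_Ioi _).trans ih

end LaplaceAdmissible

namespace Cm1

variable {f : ℝ → ℝ}

theorem continuousOn (hf : Cm1 f) : ContinuousOn f (Ioi 0) := by
  obtain ⟨p, -, f₁, hf₁, hff₁⟩ := hf
  refine ContinuousOn.congr (.mul ?_ (hf₁.mono Ioi_subset_Ici_self)) hff₁
  exact fun t ht => (continuousAt_rpow_const t p (.inl ht.ne')).continuousWithinAt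

theorem intervalIntegrable (hf : Cm1 f) {T : ℝ} (hT : 0 < T) :
    IntervalIntegrable f volume 0 T := by
  obtain ⟨p, hp, f₁, hf₁, hff₁⟩ := hf
  have hf₁T : ContinuousOn f₁ (uIcc 0 T) := by
    rw [uIcc_of_le hT.le]
    exact hf₁.mono Icc_subset_Ici_self
  refine ((intervalIntegral.intervalIntegrable_rpow' hp).mul_continuousOn hf₁T).congr ?_
  rw [uIoc_of_le hT.le]
  exact fun t ht => (hff₁ t ht.1).symm

theorem laplaceAdmissible (hf : Cm1 f) : LaplaceAdmissible f :=
  .of_continuousOn hf.continuousOn fun _ hT => hf.intervalIntegrable hT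

end Cm1

theorem Cm10.cm1 {f : ℝ → ℝ} (hf : Cm10 f) : Cm1 f :=
  let ⟨p, hp, _, hf₁⟩ := hf
  ⟨p, hp, hf₁⟩

theorem statement15_general (n : ℕ) (hn : 1 ≤ n) (κ k : ℝ → ℝ)
    (hκ : LaplaceAdmissible κ) (hk : LaplaceAdmissible k)
    (hL : ∀ t : ℝ, 0 < t → lconv κ k t = t ^ (n - 1) / (n - 1).factorial)
    (φ f : ℝ → ℝ) (hφ : LaplaceAdmissible φ) (hφc : ContinuousOn φ (Ioi 0))
    (hf : ∀ t : ℝ, 0 < t → f t = lconv κ φ t) :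
    ∀ t : ℝ, 0 < t →
      lconv κ (fun s => iteratedDeriv n (lconv k f) s) t = f t := by
  obtain ⟨m, rfl⟩ := Nat.exists_eq_add_of_le' hn
  have hkf : EqOn (lconv k f) (lconv (powKernel m) φ) (Ioi 0) := fun t ht =>
    calc
      lconv k f t = lconv k (lconv κ φ) t :=
        lconv_congr (le_of_lt ht) (eqOn_refl _ _) fun s hs => hf s hs.1
      _ = lconv (lconv κ k) φ t := by rw [lconv_comm κ k, hk.lconv_assoc hκ hφ ht]
      _ = lconv (powKernel m) φ t :=
        lconv_congr (le_of_lt ht) (fun s hs => hL s hs.1) (eqOn_refl _ _)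
  have hD : EqOn (iteratedDeriv (m + 1) (lconv k f)) φ (Ioi 0) :=
    (hkf.iteratedDeriv_of_isOpen isOpen_Ioi _).trans (hφ.iteratedDeriv_lconv_powKernel hφc m)
  intro t ht
  rw [hf t ht]
  exact lconv_congr ht.le (eqOn_refl _ _) (hD.mono Ioo_subset_Ioi_self)

/-- Second Fundamental Theorem for the GFD of arbitrary order,
Riemann-Liouville case: for a pair `(κ, k) ∈ L_n` and `f = κ * φ` with
`φ ∈ C_{-1}(0,∞)`, `(I_{(κ)} D_{(k)} f)(t) = f(t)` for all `t > 0`. -/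
theorem statement15 (n : ℕ) (hn : 1 ≤ n) (κ k : ℝ → ℝ)
    (hκ : Cm1 κ) (hk : Cm10 k)
    (hL : ∀ t : ℝ, 0 < t → lconv κ k t = t ^ (n - 1) / (n - 1).factorial)
    (φ f : ℝ → ℝ) (hφ : Cm1 φ)
    (hf : ∀ t : ℝ, 0 < t → f t = lconv κ φ t) :
    ∀ t : ℝ, 0 < t →
      lconv κ (fun s => iteratedDeriv n (lconv k f) s) t = f t := by
  exact statement15_general n hn κ k hκ.laplaceAdmissible hk.cm1.laplaceAdmissible hL φ f
    hφ.laplaceAdmissible hφ.continuousOn hf
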